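/- For probability measures μ, ν on a measurable space (E,F), sup over A ∈ F of |μ(A) − ν(A)| ≤ tanh(H(μ,ν)/4), where H is the Hilbert projective metric (with tanh(∞) := 1). -/

import Mathlib

/-!
Put `M = ‖dμ/dν‖_∞`, `N = ‖dν/dμ‖_∞`, `p = μ A`, `q = ν A`. Integrating the densities over `A`
and over `Aᶜ` gives `p ≤ M q` and `1 - q ≤ N (1 - p)`, so the cross ratio satisfies
`p (1 - q) ≤ M N q (1 - p)` (`measure_le_essSup_rnDeriv_mul`). With `a = √(p (1 - q))`,
`b = √(q (1 - p))` and `s = √(M N) = exp (H / 2)` this says `a ≤ s b`, whence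
`(s + 1) (a - b) ≤ (s - 1) (a + b)`. Multiplying by `a + b` and using `(a + b)² ≤ 1`,
`p - q = a² - b² ≤ (s - 1) / (s + 1) = tanh (H / 4)` (`sub_le_tanh_of_cross_ratio_le`).
The bound on `q - p` follows by exchanging `μ` and `ν`.
-/

open MeasureTheory
open scoped ENNReal

open scoped Classical in
/-- The Hilbert projective metric on (probability) measures, valued in `ℝ≥0∞`:
`H(μ,ν) = log(‖dμ/dν‖_∞ ‖dν/dμ‖_∞)` when `μ ∼ ν` with essentially bounded
Radon–Nikodym derivatives, and `∞` otherwise. -/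
noncomputable def hilbertDistMeas {E : Type*} [MeasurableSpace E] (μ ν : Measure E) : ℝ≥0∞ :=
  if μ ≪ ν ∧ ν ≪ μ ∧ essSup (μ.rnDeriv ν) ν ≠ ⊤ ∧ essSup (ν.rnDeriv μ) μ ≠ ⊤ then
    ENNReal.ofReal
      (Real.log ((essSup (μ.rnDeriv ν) ν).toReal * (essSup (ν.rnDeriv μ) μ).toReal))
  else ⊤

open scoped Classical in
/-- `𝒯(μ,ν) = tanh(H(μ,ν)/4)`, with the convention `tanh ∞ := 1`. -/
noncomputable def tanhDistMeas {E : Type*} [MeasurableSpace E] (μ ν : Measure E) : ℝ :=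
  if hilbertDistMeas μ ν = ⊤ then 1 else Real.tanh ((hilbertDistMeas μ ν).toReal / 4)

/-- The elementary inequality behind the bound: numbers `p, q` of `[0, 1]` whose cross ratio is at most
`exp h`, where `h ≥ 0`, satisfy `p - q ≤ tanh (h / 4)`. The cross-ratio bound is written without
division, so the endpoints `0` and `1` are allowed. -/
lemma sub_le_tanh_of_cross_ratio_le {p q h : ℝ} (hp0 : 0 ≤ p) (hp1 : p ≤ 1) (hq0 : 0 ≤ q)
    (hq1 : q ≤ 1) (hh : 0 ≤ h) (hpq : p * (1 - q) ≤ Real.exp h * (q * (1 - p))) :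
    p - q ≤ Real.tanh (h / 4) := by
  set s := Real.exp (h / 2) with hs
  have hs1 : 1 ≤ s := Real.one_le_exp (by positivity)
  have hs2 : s ^ 2 = Real.exp h := by
    rw [hs, ← Real.exp_nat_mul]; congr 1; push_cast; ring
  have htanh : Real.tanh (h / 4) = (s - 1) / (s + 1) := by
    have e : s = Real.exp (h / 4) ^ 2 := by
      rw [hs, ← Real.exp_nat_mul]; congr 1; push_cast; ring
    have hpos := Real.exp_pos (h / 4)
    rw [Real.tanh_eq, Real.exp_neg, e]
    field_simp
  have hx : 0 ≤ p * (1 - q) := mul_nonneg hp0 (by linarith)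
  have hy : 0 ≤ q * (1 - p) := mul_nonneg hq0 (by linarith)
  set a := √(p * (1 - q))
  set b := √(q * (1 - p))
  have ha : 0 ≤ a := Real.sqrt_nonneg _
  have hb : 0 ≤ b := Real.sqrt_nonneg _
  have ha2 : a ^ 2 = p * (1 - q) := Real.sq_sqrt hx
  have hb2 : b ^ 2 = q * (1 - p) := Real.sq_sqrt hy
  have hab : a ≤ s * b := by
    apply abs_le_of_sq_le_sq' _ (by positivity) |>.2
    rw [mul_pow, ha2, hb2, hs2]; exact hpq
  -- Since `a b = √(p (1 - p)) √(q (1 - q))`, the inequality of arithmetic and geometric means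
  -- gives `2 a b ≤ p (1 - p) + q (1 - q)`, so `(a + b)² ≤ 1 - (1 - p - q)²`.
  have hmul : 2 * (a * b) ≤ p * (1 - p) + q * (1 - q) := by
    have hu : 0 ≤ p * (1 - p) := mul_nonneg hp0 (by linarith)
    have hv : 0 ≤ q * (1 - q) := mul_nonneg hq0 (by linarith)
    apply abs_le_of_sq_le_sq' _ (by positivity) |>.2
    have : (2 * (a * b)) ^ 2 = 4 * ((p * (1 - p)) * (q * (1 - q))) := by
      rw [mul_pow, mul_pow, ha2, hb2]; ring
    rw [this]
    nlinarith [sq_nonneg (p * (1 - p) - q * (1 - q))]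
  have hsum : (a + b) ^ 2 ≤ 1 := by
    nlinarith [sq_nonneg (1 - p - q)]
  rw [htanh, le_div_iff₀ (by linarith)]
  have h1 : (s + 1) * (a - b) ≤ (s - 1) * (a + b) := by linarith
  calc (p - q) * (s + 1) = ((s + 1) * (a - b)) * (a + b) := by
        linear_combination (s + 1) * (hb2 - ha2)
    _ ≤ ((s - 1) * (a + b)) * (a + b) := by gcongr
    _ = (s - 1) * (a + b) ^ 2 := by ring
    _ ≤ (s - 1) * 1 := by
        apply mul_le_mul_of_nonneg_left hsum; linarith
    _ = s - 1 := mul_one _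

/-- Integrating the density `dμ/dν ≤ ‖dμ/dν‖_∞` over `B` against `ν`. -/
lemma measure_le_essSup_rnDeriv_mul {E : Type*} [MeasurableSpace E] {μ ν : Measure E}
    [IsProbabilityMeasure μ] [IsProbabilityMeasure ν] (h : μ ≪ ν)
    (hfin : essSup (μ.rnDeriv ν) ν ≠ ⊤) (B : Set E) :
    (μ B).toReal ≤ (essSup (μ.rnDeriv ν) ν).toReal * (ν B).toReal := by
  rw [← ENNReal.toReal_mul]
  apply ENNReal.toReal_mono (ENNReal.mul_ne_top hfin (measure_ne_top _ _))
  rw [← Measure.setLIntegral_rnDeriv h B]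
  calc ∫⁻ x in B, μ.rnDeriv ν x ∂ν ≤ ∫⁻ _ in B, essSup (μ.rnDeriv ν) ν ∂ν :=
        lintegral_mono_ae (ae_restrict_of_ae (ENNReal.ae_le_essSup _))
    _ = _ := by simp

/-- Sharp bound: for probability measures `μ, ν`,
`sup_{A ∈ F} |μ(A) − ν(A)| ≤ tanh(H(μ,ν)/4)`. -/
theorem stmt19 {E : Type*} [MeasurableSpace E] (μ ν : Measure E)
    [IsProbabilityMeasure μ] [IsProbabilityMeasure ν]
    (A : Set E) (hA : MeasurableSet A) :
    |(μ A).toReal - (ν A).toReal| ≤ tanhDistMeas μ ν := by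
  have hp0 : 0 ≤ (μ A).toReal := ENNReal.toReal_nonneg
  have hq0 : 0 ≤ (ν A).toReal := ENNReal.toReal_nonneg
  have hp1 : (μ A).toReal ≤ 1 := measureReal_le_one (μ := μ) (s := A)
  have hq1 : (ν A).toReal ≤ 1 := measureReal_le_one (μ := ν) (s := A)
  unfold tanhDistMeas
  by_cases hc : μ ≪ ν ∧ ν ≪ μ ∧ essSup (μ.rnDeriv ν) ν ≠ ⊤ ∧ essSup (ν.rnDeriv μ) μ ≠ ⊤
  · have hH : hilbertDistMeas μ ν = ENNReal.ofReal (Real.log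
        ((essSup (μ.rnDeriv ν) ν).toReal * (essSup (ν.rnDeriv μ) μ).toReal)) := if_pos hc
    obtain ⟨h1, h2, hM, hN⟩ := hc
    have bM := measure_le_essSup_rnDeriv_mul h1 hM
    have bN := measure_le_essSup_rnDeriv_mul h2 hN
    have hM1 := bM Set.univ
    have hN1 := bN Set.univ
    have bMc := bM Aᶜ
    have bNc := bN Aᶜ
    have bMA := bM A
    have bNA := bN A
    have cμ : (μ Aᶜ).toReal = 1 - (μ A).toReal := probReal_compl_eq_one_sub (μ := μ) hA
    have cν : (ν Aᶜ).toReal = 1 - (ν A).toReal := probReal_compl_eq_one_sub (μ := ν) hA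
    rw [cμ, cν] at bMc bNc
    simp only [measure_univ, ENNReal.toReal_one, mul_one] at hM1 hN1
    rw [hH, if_neg ENNReal.ofReal_ne_top]
    generalize (essSup (μ.rnDeriv ν) ν).toReal = M at *
    generalize (essSup (ν.rnDeriv μ) μ).toReal = N at *
    generalize (μ A).toReal = p at *
    generalize (ν A).toReal = q at *
    have hMN : 1 ≤ M * N := one_le_mul_of_one_le_of_one_le hM1 hN1
    have hlog := Real.log_nonneg hMN
    rw [ENNReal.toReal_ofReal hlog]
    have hexp : Real.exp (Real.log (M * N)) = M * N := Real.exp_log (by linarith)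
    rw [abs_le']
    constructor
    · apply sub_le_tanh_of_cross_ratio_le hp0 hp1 hq0 hq1 hlog
      rw [hexp]
      calc p * (1 - q) ≤ (M * q) * (N * (1 - p)) :=
            mul_le_mul bMA bNc (by linarith) (by positivity)
        _ = _ := by ring
    · rw [neg_sub]
      apply sub_le_tanh_of_cross_ratio_le hq0 hq1 hp0 hp1 hlog
      rw [hexp]
      calc q * (1 - p) ≤ (N * p) * (M * (1 - q)) :=
            mul_le_mul bNA bMc (by linarith) (by positivity)
        _ = _ := by ring
  · have hH : hilbertDistMeas μ ν = ⊤ := if_neg hc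
    rw [if_pos hH, abs_le]
    constructor <;> linarith
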